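/- For every integer m ≥ 0 and every p ∈ [1,∞], with γ = max(0, m − 1/p), there is a constant c > 0, depending only on f, D, m and p, such that for every ν ∈ (0,1], the time average over [T₁,T₂] satisfies { |u(t)|_{m,p}² }^{1/2} ≥ c ν^{−γ}. -/

import Mathlib

open MeasureTheory Set
open scoped ENNReal

/-- The `L^p` norm (on the circle, i.e. over one period `(0,1]`) of the `m`-th
derivative of a function `v : ℝ → ℝ` (identified with a function on `S¹ = ℝ/ℤ`). -/
noncomputable def sobLp (m : ℕ) (p : ℝ≥0∞) (v : ℝ → ℝ) : ℝ :=
  (eLpNorm (iteratedDeriv m v) p (volume.restrict (Ioc (0:ℝ) 1))).toReal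

/-- `u` is a smooth, space-periodic, zero-mean-value solution of the generalised
Burgers equation `u_t + f'(u) u_x - ν u_xx = 0` with strongly convex `f` and
nonzero initial condition. -/
structure IsBurgersSolution (f : ℝ → ℝ) (σ ν : ℝ) (u : ℝ → ℝ → ℝ) : Prop where
  hf : ContDiff ℝ (⊤ : ℕ∞) f
  hσ : 0 < σ
  hconv : ∀ y, σ ≤ iteratedDeriv 2 f y
  hν : 0 < ν
  hu : ContDiffOn ℝ (⊤ : ℕ∞) (Function.uncurry u) (Ici (0:ℝ) ×ˢ univ)
  hper : ∀ t x, u t (x + 1) = u t x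
  hpde : ∀ t, 0 < t → ∀ x,
    deriv (fun s => u s x) t + deriv f (u t x) * deriv (u t) x
      - ν * deriv (deriv (u t)) x = 0
  hmean : ∀ t, 0 ≤ t → ∫ x in Ioc (0:ℝ) 1, u t x = 0
  hinit : ∃ x, u 0 x ≠ 0

/-- The quantity `D = max(|u₀|₁⁻¹, |u₀|_{1,∞})`. -/
noncomputable def burgersD (u : ℝ → ℝ → ℝ) : ℝ :=
  max (sobLp 0 1 (u 0))⁻¹ (sobLp 1 ⊤ (u 0))

/-- `T₁ = D⁻² C̃⁻¹ / 4`. -/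
noncomputable def burgersT₁ (D Ct : ℝ) : ℝ := (D ^ 2)⁻¹ * Ct⁻¹ / 4

/-- `T₂ = max(3T₁/2, 2Dσ⁻¹)`. -/
noncomputable def burgersT₂ (σ D Ct : ℝ) : ℝ :=
  max (3 / 2 * burgersT₁ D Ct) (2 * D * σ⁻¹)

/-- Time average over `[T₁, T₂]`. -/
noncomputable def timeAvg (T₁ T₂ : ℝ) (A : ℝ → ℝ) : ℝ :=
  (T₂ - T₁)⁻¹ * ∫ t in T₁..T₂, A t

/-- The structure function `S_p(ℓ)`. -/
noncomputable def structFun (T₁ T₂ : ℝ) (u : ℝ → ℝ → ℝ) (p ℓ : ℝ) : ℝ :=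
  timeAvg T₁ T₂ (fun t => ∫ x in Ioc (0:ℝ) 1, |u t (x + ℓ) - u t x| ^ p)

/-! ### Lebesgue norms of continuous periodic functions -/

noncomputable def lpN (p : ℝ≥0∞) (g : ℝ → ℝ) : ℝ :=
  (eLpNorm g p (volume.restrict (Ioc (0:ℝ) 1))).toReal

lemma sobLp_eq (m : ℕ) (p : ℝ≥0∞) (v : ℝ → ℝ) : sobLp m p v = lpN p (iteratedDeriv m v) := rfl

lemma lpN_nonneg (p : ℝ≥0∞) (g : ℝ → ℝ) : 0 ≤ lpN p g := ENNReal.toReal_nonneg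

lemma vol_univ : (volume.restrict (Ioc (0:ℝ) 1)) univ = 1 := by simp

instance isProb_circle : IsProbabilityMeasure (volume.restrict (Ioc (0:ℝ) 1)) := ⟨vol_univ⟩

lemma memLp_cont {g : ℝ → ℝ} (hg : Continuous g) (p : ℝ≥0∞) :
    MemLp g p (volume.restrict (Ioc (0:ℝ) 1)) := by
  obtain ⟨C, hC⟩ := (isCompact_Icc (a := (0:ℝ)) (b := 1)).exists_bound_of_continuousOn
    hg.continuousOn
  refine MemLp.of_bound hg.aestronglyMeasurable C ?_
  filter_upwards [ae_restrict_mem measurableSet_Ioc] with x hx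
  exact hC x (Ioc_subset_Icc_self hx)

lemma lpN_le_of_bound {g : ℝ → ℝ} {B : ℝ} (hB : 0 ≤ B) (h : ∀ x, |g x| ≤ B) (p : ℝ≥0∞) :
    lpN p g ≤ B := by
  unfold lpN
  have := eLpNorm_le_of_ae_bound (p := p) (μ := volume.restrict (Ioc (0:ℝ) 1)) (f := g) (C := B)
    (Filter.Eventually.of_forall h)
  rw [vol_univ] at this
  simp only [ENNReal.one_rpow, one_mul] at this
  exact ENNReal.toReal_le_of_le_ofReal hB this

lemma lpN_le_of_bound' {g : ℝ → ℝ} {B : ℝ} (hB : 0 ≤ B) (h : ∀ x ∈ Icc (0:ℝ) 1, |g x| ≤ B)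
    (p : ℝ≥0∞) : lpN p g ≤ B := by
  unfold lpN
  have := eLpNorm_le_of_ae_bound (p := p) (μ := volume.restrict (Ioc (0:ℝ) 1)) (f := g) (C := B)
    (by
      filter_upwards [ae_restrict_mem measurableSet_Ioc] with x hx
      exact h x (Ioc_subset_Icc_self hx))
  rw [vol_univ] at this
  simp only [ENNReal.one_rpow, one_mul] at this
  exact ENNReal.toReal_le_of_le_ofReal hB this

lemma lpN_mono_exp {g : ℝ → ℝ} (hg : Continuous g) {p q : ℝ≥0∞} (hpq : p ≤ q) :
    lpN p g ≤ lpN q g := by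
  unfold lpN
  exact ENNReal.toReal_mono (memLp_cont hg q).2.ne
    (eLpNorm_le_eLpNorm_of_exponent_le hpq hg.aestronglyMeasurable)

lemma periodic_exists_mem {g : ℝ → ℝ} (hp : ∀ x, g (x + 1) = g x) (x : ℝ) :
    ∃ y ∈ Ico (0:ℝ) 1, g y = g x := by
  have hP : Function.Periodic g 1 := hp
  obtain ⟨y, hy, h⟩ := hP.exists_mem_Ico₀ one_pos x
  exact ⟨y, hy, h.symm⟩

lemma abs_le_lpN_top {g : ℝ → ℝ} (hg : Continuous g) (hp : ∀ x, g (x + 1) = g x) (x : ℝ) :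
    |g x| ≤ lpN ⊤ g := by
  have hfin := (memLp_cont hg ⊤).2.ne
  have hae : ∀ᵐ y ∂(volume.restrict (Ioc (0:ℝ) 1)), |g y| ≤ lpN ⊤ g := by
    filter_upwards [ae_le_eLpNormEssSup (f := g) (μ := volume.restrict (Ioc (0:ℝ) 1))] with y hy
    rw [← eLpNorm_exponent_top] at hy
    have := ENNReal.toReal_mono hfin hy
    simpa [lpN] using this
  have hU : IsOpen (Ioo (0:ℝ) 1 ∩ {y | lpN ⊤ g < |g y|}) :=
    isOpen_Ioo.inter (isOpen_lt continuous_const hg.abs)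
  have h0 : volume (Ioo (0:ℝ) 1 ∩ {y | lpN ⊤ g < |g y|}) = 0 := by
    rw [ae_restrict_iff' measurableSet_Ioc] at hae
    refine measure_mono_null ?_ hae
    intro y hy hh
    exact absurd (hh (Ioo_subset_Ioc_self hy.1)) (not_le.2 hy.2)
  replace h0 := (hU.measure_eq_zero_iff volume).1 h0
  have h1 : ∀ y ∈ Ioo (0:ℝ) 1, |g y| ≤ lpN ⊤ g := by
    intro y hy
    by_contra hh
    have : y ∈ (∅ : Set ℝ) := h0 ▸ ⟨hy, not_le.1 hh⟩
    exact this
  obtain ⟨y, hy, hyx⟩ := periodic_exists_mem hp x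
  rw [← hyx]
  have hcl : y ∈ closure (Ioo (0:ℝ) 1) := by
    rw [closure_Ioo (by norm_num)]; exact Ico_subset_Icc_self hy
  have hclosed : IsClosed {y | |g y| ≤ lpN ⊤ g} := isClosed_le hg.abs continuous_const
  exact closure_minimal h1 hclosed hcl

lemma lpN_one {g : ℝ → ℝ} (hg : Continuous g) : lpN 1 g = ∫ x in (0:ℝ)..1, |g x| := by
  unfold lpN
  rw [(memLp_cont hg 1).eLpNorm_eq_integral_rpow_norm one_ne_zero ENNReal.one_ne_top]
  simp only [ENNReal.toReal_one, Real.rpow_one, inv_one, Real.norm_eq_abs]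
  rw [ENNReal.toReal_ofReal (by positivity), intervalIntegral.integral_of_le zero_le_one]

lemma lpN_two {g : ℝ → ℝ} (hg : Continuous g) : lpN 2 g ^ 2 = ∫ x in (0:ℝ)..1, g x ^ 2 := by
  unfold lpN
  rw [(memLp_cont hg 2).eLpNorm_eq_integral_rpow_norm two_ne_zero ENNReal.ofNat_ne_top]
  rw [ENNReal.toReal_ofReal (by positivity), intervalIntegral.integral_of_le zero_le_one]
  rw [← Real.rpow_natCast, ← Real.rpow_mul (by positivity)]
  simp

lemma lpN_sub_le {g h : ℝ → ℝ} (hg : Continuous g) (hh : Continuous h) {ε : ℝ} (hε : 0 ≤ ε)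
    (H : ∀ x ∈ Icc (0:ℝ) 1, |g x - h x| ≤ ε) {p : ℝ≥0∞} (hp : 1 ≤ p) :
    lpN p g ≤ lpN p h + ε := by
  have h1 : lpN p g ≤ lpN p h + lpN p (g - h) := by
    unfold lpN
    rw [← ENNReal.toReal_add (memLp_cont hh p).2.ne (memLp_cont (hg.sub hh) p).2.ne]
    refine ENNReal.toReal_mono
      (ENNReal.add_ne_top.2 ⟨(memLp_cont hh p).2.ne, (memLp_cont (hg.sub hh) p).2.ne⟩) ?_
    have := eLpNorm_add_le (μ := volume.restrict (Ioc (0:ℝ) 1)) (p := p)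
      hh.aestronglyMeasurable (hg.sub hh).aestronglyMeasurable hp
    have e : h + (g - h) = g := by ring
    rwa [e] at this
  have h2 : lpN p (g - h) ≤ ε := lpN_le_of_bound' hε H p
  linarith

/-- Hölder on a subinterval. -/
lemma integral_abs_le_lpN {z : ℝ → ℝ} (hz : Continuous z) {p : ℝ≥0∞} (hp : 1 ≤ p) {a h : ℝ}
    (ha : 0 ≤ a) (hh : 0 < h) (hah : a + h ≤ 1) :
    ∫ x in a..(a + h), |z x| ≤ h ^ (1 - (1 / p).toReal) * lpN p z := by
  have hsub : Ioc a (a + h) ⊆ Ioc (0:ℝ) 1 := Ioc_subset_Ioc ha hah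
  have hmono : volume.restrict (Ioc a (a+h)) ≤ volume.restrict (Ioc (0:ℝ) 1) :=
    Measure.restrict_mono hsub le_rfl
  have m1 : MemLp z 1 (volume.restrict (Ioc a (a+h))) := (memLp_cont hz 1).mono_measure hmono
  have e1 : ∫ x in a..(a + h), |z x| = (eLpNorm z 1 (volume.restrict (Ioc a (a+h)))).toReal := by
    rw [m1.eLpNorm_eq_integral_rpow_norm one_ne_zero ENNReal.one_ne_top]
    simp only [ENNReal.toReal_one, Real.rpow_one, inv_one, Real.norm_eq_abs]
    rw [ENNReal.toReal_ofReal (by positivity), intervalIntegral.integral_of_le (by linarith)]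
  rw [e1]
  have h1 := eLpNorm_le_eLpNorm_mul_rpow_measure_univ (μ := volume.restrict (Ioc a (a+h)))
    (f := z) hp hz.aestronglyMeasurable
  have hv : (volume.restrict (Ioc a (a+h))) univ = ENNReal.ofReal h := by simp
  rw [hv] at h1
  have h2 : eLpNorm z p (volume.restrict (Ioc a (a+h))) ≤
      eLpNorm z p (volume.restrict (Ioc (0:ℝ) 1)) := eLpNorm_mono_measure _ hmono
  have h3 := h1.trans (mul_le_mul_left h2 _)
  have hne : ENNReal.ofReal h ^ (1 / (1:ℝ≥0∞).toReal - 1 / p.toReal) ≠ ⊤ := by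
    rw [ENNReal.ofReal_rpow_of_pos hh]; exact ENNReal.ofReal_ne_top
  have h4 := ENNReal.toReal_mono (ENNReal.mul_ne_top (memLp_cont hz p).2.ne hne) h3
  rw [ENNReal.toReal_mul, ENNReal.ofReal_rpow_of_pos hh, ENNReal.toReal_ofReal (by positivity)]
    at h4
  have e2 : 1 / (1:ℝ≥0∞).toReal - 1 / p.toReal = 1 - (1 / p).toReal := by simp
  rw [e2] at h4
  rw [mul_comm]
  exact h4

lemma one_div_toReal_mem {p : ℝ≥0∞} (hp : 1 ≤ p) :
    0 ≤ (1 / p).toReal ∧ (1 / p).toReal ≤ 1 := by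
  refine ⟨ENNReal.toReal_nonneg, ?_⟩
  have : 1 / p ≤ 1 := by simpa using hp
  simpa using ENNReal.toReal_mono ENNReal.one_ne_top this

/-- Lower bound on the `L^p` norm from the size of a super-level set. -/
lemma lpN_ge_of_meas {z : ℝ → ℝ} (hz : Continuous z) {p : ℝ≥0∞} (hp : 1 ≤ p) {l d : ℝ}
    (hl : 0 ≤ l) (hd : 0 < d)
    (hm : ENNReal.ofReal d ≤ (volume.restrict (Ioc (0:ℝ) 1)) {x | l ≤ |z x|}) :
    l * d ^ (1 / p).toReal ≤ lpN p z := by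
  have hms : MeasurableSet {x | l ≤ |z x|} :=
    (isClosed_le continuous_const hz.abs).measurableSet
  have hpos : (volume.restrict (Ioc (0:ℝ) 1)) {x | l ≤ |z x|} ≠ 0 := by
    intro h0
    rw [h0] at hm
    have : 0 < ENNReal.ofReal d := ENNReal.ofReal_pos.2 hd
    exact absurd hm (not_le.2 this)
  have h1 := eLpNorm_indicator_const' (c := l) hms hpos (p := p) (by positivity)
  have h2 : eLpNorm ({x | l ≤ |z x|}.indicator fun _ => l) p (volume.restrict (Ioc (0:ℝ) 1))
      ≤ eLpNorm z p (volume.restrict (Ioc (0:ℝ) 1)) := by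
    refine eLpNorm_mono fun x => ?_
    by_cases hx : x ∈ {x | l ≤ |z x|}
    · rw [indicator_of_mem hx]
      simpa [abs_of_nonneg hl] using hx
    · rw [indicator_of_notMem hx]; simp
  rw [h1] at h2
  have h3 : ‖l‖ₑ * ENNReal.ofReal d ^ (1 / p.toReal) ≤
      eLpNorm z p (volume.restrict (Ioc (0:ℝ) 1)) := by
    refine le_trans ?_ h2
    gcongr
  have h4 := ENNReal.toReal_mono (memLp_cont hz p).2.ne h3
  rw [ENNReal.toReal_mul, ENNReal.ofReal_rpow_of_pos hd, ENNReal.toReal_ofReal (by positivity)]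
    at h4
  refine le_trans (le_of_eq ?_) h4
  simp [abs_of_nonneg hl]

/-! ### Interpolation inequalities for a single periodic function -/

lemma interp_point {V w z : ℝ → ℝ} (hV : ∀ x, HasDerivAt V (w x) x)
    (hw : ∀ x, HasDerivAt w (z x) x) (hz : Continuous z)
    {p : ℝ≥0∞} (hp : 1 ≤ p) {h : ℝ} (h0 : 0 < h) (h1 : h ≤ 1) {B : ℝ}
    (hB : ∀ a, 0 ≤ a → a + h ≤ 1 → |V (a + h) - V a| ≤ B)
    {x : ℝ} (hx : x ∈ Icc (0:ℝ) 1) :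
    |w x| ≤ B / h + h ^ (1 - (1 / p).toReal) * lpN p z := by
  set a := x * (1 - h) with ha
  have ha0 : 0 ≤ a := mul_nonneg hx.1 (by linarith)
  have hax : a ≤ x := by nlinarith [hx.1]
  have hxa : x ≤ a + h := by nlinarith [hx.2]
  have hah : a + h ≤ 1 := by nlinarith [hx.2]
  obtain ⟨ξ, hξ, hξe⟩ := exists_hasDerivAt_eq_slope V w (by linarith : a < a + h)
    (fun y _ => (hV y).continuousAt.continuousWithinAt) (fun y _ => hV y)
  have hwξ : |w ξ| ≤ B / h := by
    rw [hξe, show a + h - a = h by ring, abs_div, abs_of_pos h0]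
    exact div_le_div_of_nonneg_right (hB a ha0 hah) h0.le
  have hInteg : ∀ c d : ℝ, ∫ y in c..d, z y = w d - w c := fun c d =>
    intervalIntegral.integral_eq_sub_of_hasDerivAt (fun y _ => hw y) (hz.intervalIntegrable _ _)
  have hdiff : |w x - w ξ| ≤ ∫ y in a..(a + h), |z y| := by
    rw [← hInteg ξ x]
    have h2 := intervalIntegral.norm_integral_le_abs_integral_norm (f := z) (a := ξ) (b := x)
      (μ := volume)
    simp only [Real.norm_eq_abs] at h2
    refine h2.trans ?_
    have h3 := intervalIntegral.abs_integral_mono_interval (f := fun y => |z y|)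
      (a := ξ) (b := x) (c := a) (d := a + h) (μ := volume)
      (by
        rw [uIoc_of_le (by linarith : a ≤ a + h)]
        intro y hy
        rw [mem_uIoc] at hy
        rcases hy with hy | hy
        · exact ⟨by linarith [hξ.1, hy.1], by linarith [hy.2]⟩
        · exact ⟨by linarith [hy.1], by linarith [hξ.2, hy.2]⟩)
      (Filter.Eventually.of_forall fun y => abs_nonneg _)
      (hz.abs.intervalIntegrable _ _)
    refine h3.trans (le_of_eq (abs_of_nonneg ?_))
    exact intervalIntegral.integral_nonneg (by linarith) fun y _ => abs_nonneg _
  have hH := integral_abs_le_lpN hz hp ha0 h0 hah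
  have : |w x| ≤ |w ξ| + |w x - w ξ| := by
    have := abs_add_le (w ξ) (w x - w ξ)
    simpa using this
  linarith

lemma interp_step {V w z : ℝ → ℝ} (hV : ∀ x, HasDerivAt V (w x) x)
    (hw : ∀ x, HasDerivAt w (z x) x) (hz : Continuous z)
    (pV : ∀ x, V (x + 1) = V x)
    {p : ℝ≥0∞} (hp : 1 ≤ p) {ρ : ℝ} (hρ : 0 < ρ) (H : ρ * lpN ⊤ V ≤ lpN ⊤ w) :
    1 / 2 * (ρ / 4) ^ (1 - (1 / p).toReal) * lpN ⊤ w ≤ lpN p z := by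
  obtain ⟨q0, q1⟩ := one_div_toReal_mem hp
  have hVc : Continuous V := continuous_iff_continuousAt.2 fun x => (hV x).continuousAt
  have hN := lpN_nonneg ⊤ w
  have hz0 := lpN_nonneg p z
  set e := 1 - (1 / p).toReal with he
  have he0 : 0 ≤ e := by linarith
  by_cases h4 : ρ ≤ 4
  · have hb : lpN ⊤ w ≤ lpN p z := by
      refine lpN_le_of_bound' hz0 (fun x hx => ?_) ⊤
      have := interp_point hV hw hz hp one_pos le_rfl (B := 0)
        (fun a ha0 ha1 => by rw [pV a]; simp) hx
      simpa using this
    have h5 : (ρ / 4) ^ e ≤ 1 := Real.rpow_le_one (by positivity) (by linarith) he0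
    have h6 : 0 ≤ (ρ / 4) ^ e := by positivity
    nlinarith
  · push Not at h4
    set h := 4 / ρ with hh
    have h0 : 0 < h := by positivity
    have h1 : h ≤ 1 := by rw [hh, div_le_one hρ]; linarith
    have hb : lpN ⊤ w ≤ (2 * lpN ⊤ V) / h + h ^ e * lpN p z := by
      refine lpN_le_of_bound' (by have := lpN_nonneg ⊤ V; positivity) (fun x hx => ?_) ⊤
      refine interp_point hV hw hz hp h0 h1 (fun a _ _ => ?_) hx
      have e1 := abs_le_lpN_top hVc pV (a + h)
      have e2 := abs_le_lpN_top hVc pV a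
      calc |V (a + h) - V a| ≤ |V (a + h)| + |V a| := abs_sub _ _
        _ ≤ _ := by linarith
    have h7 : (2 * lpN ⊤ V) / h = 1 / 2 * (ρ * lpN ⊤ V) := by rw [hh]; field_simp; ring
    rw [h7] at hb
    have h8 : 1 / 2 * lpN ⊤ w ≤ h ^ e * lpN p z := by linarith
    have h9 : (ρ / 4) ^ e * h ^ e = 1 := by
      rw [← Real.mul_rpow (by positivity) h0.le, hh]
      have : ρ / 4 * (4 / ρ) = 1 := by field_simp
      rw [this, Real.one_rpow]
    have h10 : 0 ≤ (ρ / 4) ^ e := by positivity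
    calc 1 / 2 * (ρ / 4) ^ e * lpN ⊤ w = (ρ / 4) ^ e * (1 / 2 * lpN ⊤ w) := by ring
      _ ≤ (ρ / 4) ^ e * (h ^ e * lpN p z) := mul_le_mul_of_nonneg_left h8 h10
      _ = lpN p z := by rw [← mul_assoc, h9, one_mul]

structure GoodFn (D lam C ν : ℝ) (v : ℝ → ℝ) : Prop where
  smooth : ContDiff ℝ (⊤ : ℕ∞) v
  per : ∀ x, v (x + 1) = v x
  bd : ∀ x, |v x| ≤ D
  l1 : ∫ x in (0:ℝ)..1, |deriv v x| ≤ 2 * D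
  linf : ∀ x, |deriv v x| ≤ C / ν
  l2 : lam / ν ≤ ∫ x in (0:ℝ)..1, (deriv v x) ^ 2

lemma smooth_iter {v : ℝ → ℝ} (h : ContDiff ℝ (⊤ : ℕ∞) v) (k : ℕ) (x : ℝ) :
    HasDerivAt (iteratedDeriv k v) (iteratedDeriv (k + 1) v x) x := by
  rw [iteratedDeriv_succ]
  refine DifferentiableAt.hasDerivAt ?_
  exact (h.differentiable_iteratedDeriv k (by exact_mod_cast ENat.natCast_lt_top k)) x

lemma smooth_cont {v : ℝ → ℝ} (h : ContDiff ℝ (⊤ : ℕ∞) v) (k : ℕ) :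
    Continuous (iteratedDeriv k v) :=
  continuous_iff_continuousAt.2 fun x => (smooth_iter h k x).continuousAt

lemma per_deriv {v : ℝ → ℝ} (h : ∀ x, v (x + 1) = v x) (x : ℝ) : deriv v (x + 1) = deriv v x := by
  rw [← deriv_comp_add_const]
  congr 1
  ext y; exact h y

lemma per_iter {v : ℝ → ℝ} (h : ∀ x, v (x + 1) = v x) (k : ℕ) :
    ∀ x, iteratedDeriv k v (x + 1) = iteratedDeriv k v x := by
  induction k with
  | zero => simpa using h
  | succ k ih => rw [iteratedDeriv_succ]; exact per_deriv ih

lemma good_base {D lam C ν : ℝ} (hD : 0 < D) {v : ℝ → ℝ}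
    (hv : GoodFn D lam C ν v) : lam / (2 * D) / ν ≤ lpN ⊤ (iteratedDeriv 1 v) := by
  have hc := smooth_cont hv.smooth 1
  have hb := abs_le_lpN_top hc (per_iter hv.per 1)
  set a := lpN ⊤ (iteratedDeriv 1 v)
  have ha : 0 ≤ a := lpN_nonneg _ _
  rw [iteratedDeriv_one] at hc hb
  have h1 : ∫ x in (0:ℝ)..1, (deriv v x) ^ 2 ≤ ∫ x in (0:ℝ)..1, a * |deriv v x| := by
    refine intervalIntegral.integral_mono_on zero_le_one ((hc.pow 2).intervalIntegrable _ _)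
      ((continuous_const.mul hc.abs).intervalIntegrable _ _) fun x _ => ?_
    rw [← sq_abs]
    nlinarith [hb x, abs_nonneg (deriv v x)]
  rw [intervalIntegral.integral_const_mul] at h1
  have h2 : lam / ν ≤ a * (2 * D) :=
    hv.l2.trans (h1.trans (mul_le_mul_of_nonneg_left hv.l1 ha))
  rw [div_div, mul_comm, ← div_div, div_le_iff₀ (by positivity)] 
  exact h2

lemma good_ratio {D lam C ν : ℝ} (hD : 0 < D) (hlam : 0 < lam) (hν : 0 < ν) {v : ℝ → ℝ}
    (hv : GoodFn D lam C ν v) (k : ℕ) :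
    (lam / (2 * D ^ 2) / 8 ^ k / ν) * lpN ⊤ (iteratedDeriv k v)
      ≤ lpN ⊤ (iteratedDeriv (k + 1) v) := by
  induction k with
  | zero =>
    have h1 := good_base hD hv
    have h2 : lpN ⊤ (iteratedDeriv 0 v) ≤ D := by
      rw [iteratedDeriv_zero]; exact lpN_le_of_bound hD.le hv.bd ⊤
    calc _ ≤ (lam / (2 * D ^ 2) / 8 ^ 0 / ν) * D := mul_le_mul_of_nonneg_left h2 (by positivity)
      _ = lam / (2 * D) / ν := by field_simp
      _ ≤ _ := h1
  | succ k ih =>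
    have := interp_step (smooth_iter hv.smooth k) (smooth_iter hv.smooth (k+1))
      (smooth_cont hv.smooth (k + 2)) (per_iter hv.per k) (p := ⊤) le_top
      (by positivity) ih
    refine le_trans (le_of_eq ?_) this
    rw [ENNReal.div_top, ENNReal.toReal_zero, sub_zero, Real.rpow_one]
    ring

lemma good_lower_top {D lam C ν : ℝ} (hD : 0 < D) (hlam : 0 < lam) (hν : 0 < ν) {v : ℝ → ℝ}
    (hv : GoodFn D lam C ν v) (k : ℕ) :
    lam / (2 * D) * (∏ i ∈ Finset.range k, lam / (2 * D ^ 2) / 8 ^ (i + 1)) / ν ^ (k + 1)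
      ≤ lpN ⊤ (iteratedDeriv (k + 1) v) := by
  induction k with
  | zero => simpa using good_base hD hv
  | succ k ih =>
    refine le_trans ?_ (good_ratio hD hlam hν hv (k + 1))
    refine le_trans (le_of_eq ?_) (mul_le_mul_of_nonneg_left ih (by positivity))
    rw [Finset.prod_range_succ]
    field_simp
    ring

lemma good_lower_one {D lam C : ℝ} (hD : 0 < D) (hlam : 0 < lam) (hC : 0 < C)
    {p : ℝ≥0∞} (hp : 1 ≤ p) :
    ∃ c > 0, ∀ ν, 0 < ν → ∀ v, GoodFn D lam C ν v →
      c * ν ^ (-(1 - (1 / p).toReal)) ≤ lpN p (iteratedDeriv 1 v) := by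
  refine ⟨lam / (4 * D) * (lam / (2 * C ^ 2)) ^ (1 / p).toReal, by positivity, ?_⟩
  intro ν hν v hv
  have hc := smooth_cont hv.smooth 1
  have e1 : iteratedDeriv 1 v = deriv v := iteratedDeriv_one
  set w := iteratedDeriv 1 v with hw
  have hE : MeasurableSet {x | lam / (4 * D) / ν ≤ |w x|} :=
    (isClosed_le continuous_const hc.abs).measurableSet
  set E := {x | lam / (4 * D) / ν ≤ |w x|} with hEdef
  set μ := volume.restrict (Ioc (0:ℝ) 1) with hμ
  have hInteg : ∫ x, (w x) ^ 2 ∂μ ≤ ∫ x, (lam / (4 * D) / ν * |w x| +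
      E.indicator (fun _ => (C / ν) ^ 2) x) ∂μ := by
    refine integral_mono ?_ ?_ fun x => ?_
    · exact memLp_one_iff_integrable.1 (memLp_cont (hc.pow 2) 1)
    · refine Integrable.add ?_ ?_
      · exact memLp_one_iff_integrable.1 (memLp_cont (continuous_const.mul hc.abs) 1)
      · exact (integrable_const _).indicator hE
    · have hb : |w x| ≤ C / ν := by rw [e1]; exact hv.linf x
      have h0 := abs_nonneg (w x)
      have : 0 < lam / (4 * D) / ν := by positivity
      dsimp only
      rw [← sq_abs]
      by_cases hx : x ∈ E
      · rw [indicator_of_mem hx]; nlinarith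
      · rw [indicator_of_notMem hx]
        have hx' : |w x| < lam / (4 * D) / ν := not_le.1 hx
        nlinarith
  have hI1 : Integrable (fun x => lam / (4 * D) / ν * |w x|) μ :=
    memLp_one_iff_integrable.1 (memLp_cont (continuous_const.mul hc.abs) 1)
  rw [integral_add hI1
    ((integrable_const _).indicator hE), integral_const_mul, integral_indicator_const _ hE] at hInteg
  have hl1 := hv.l1
  have hl2 := hv.l2
  rw [← e1, intervalIntegral.integral_of_le zero_le_one] at hl1 hl2
  have h3 : lam / (4 * D) / ν * (∫ x, |w x| ∂μ) ≤ lam / (4 * D) / ν * (2 * D) :=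
    mul_le_mul_of_nonneg_left hl1 (by positivity)
  have h4 : lam / (4 * D) / ν * (2 * D) = lam / ν / 2 := by field_simp; ring
  have h5 : lam / ν / 2 ≤ μ.real E * (C / ν) ^ 2 := by
    simp only [smul_eq_mul] at hInteg
    linarith
  have h6 : lam / (2 * C ^ 2) * ν ≤ μ.real E := by
    have : lam / ν / 2 / (C / ν) ^ 2 ≤ μ.real E := by
      rwa [div_le_iff₀ (by positivity)]
    refine le_trans (le_of_eq ?_) this
    field_simp
  have h7 := lpN_ge_of_meas hc hp (l := lam / (4 * D) / ν) (d := lam / (2 * C ^ 2) * ν)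
    (by positivity) (by positivity) (by
      refine (ENNReal.ofReal_le_ofReal h6).trans ?_
      rw [ofReal_measureReal])
  refine le_trans (le_of_eq ?_) h7
  rw [Real.mul_rpow (by positivity) hν.le, neg_sub, Real.rpow_sub hν, Real.rpow_one]
  ring

lemma good_lower {D lam C : ℝ} (hD : 0 < D) (hlam : 0 < lam) (hC : 0 < C) (m : ℕ)
    (hm : 1 ≤ m) {p : ℝ≥0∞} (hp : 1 ≤ p) :
    ∃ c > 0, ∀ ν, 0 < ν → ∀ v, GoodFn D lam C ν v →
      c * ν ^ (-(max 0 ((m : ℝ) - (1 / p).toReal))) ≤ sobLp m p v := by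
  obtain ⟨q0, q1⟩ := one_div_toReal_mem hp
  have hmr : (1:ℝ) ≤ m := by exact_mod_cast hm
  rw [max_eq_right (by linarith)]
  rcases Nat.exists_eq_add_of_le hm with ⟨k, rfl⟩
  rcases k with _ | k
  · obtain ⟨c, hc, H⟩ := good_lower_one hD hlam hC hp
    refine ⟨c, hc, fun ν hν v hv => ?_⟩
    simpa [sobLp_eq] using H ν hν v hv
  · refine ⟨1 / 2 * (lam / (2 * D ^ 2) / 8 ^ k / 4) ^ (1 - (1 / p).toReal) *
      (lam / (2 * D) * (∏ i ∈ Finset.range k, lam / (2 * D ^ 2) / 8 ^ (i + 1))), ?_, ?_⟩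
    · have : 0 < ∏ i ∈ Finset.range k, lam / (2 * D ^ 2) / 8 ^ (i + 1) :=
        Finset.prod_pos fun i _ => by positivity
      positivity
    · intro ν hν v hv
      have h1 := interp_step (smooth_iter hv.smooth k) (smooth_iter hv.smooth (k+1))
        (smooth_cont hv.smooth (k + 2)) (per_iter hv.per k) hp
        (by positivity) (good_ratio hD hlam hν hv k)
      have h2 := good_lower_top hD hlam hν hv k
      rw [sobLp_eq, show 1 + (k + 1) = k + 2 by ring]
      refine le_trans ?_ h1
      refine le_trans (le_of_eq ?_) (mul_le_mul_of_nonneg_left h2 (by positivity))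
      have e3 : lam / (2 * D ^ 2) / 8 ^ k / ν / 4 = (lam / (2 * D ^ 2) / 8 ^ k / 4) * ν⁻¹ := by
        ring
      rw [e3, Real.mul_rpow (by positivity) (by positivity), Real.inv_rpow hν.le,
        ← Real.rpow_neg hν.le]
      have e4 : ν ^ (-(((k + 2 : ℕ) : ℝ) - (1 / p).toReal)) =
          ν ^ (-(1 - (1 / p).toReal)) / ν ^ (k + 1) := by
        rw [← Real.rpow_natCast, ← Real.rpow_sub hν]
        congr 1; push_cast; ring
      rw [e4]
      ring

/-! ### Smoothness in space-time -/

abbrev HS : Set (ℝ × ℝ) := Ici (0:ℝ) ×ˢ (univ : Set ℝ)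

abbrev SmoothST (g : ℝ → ℝ → ℝ) : Prop := ContDiffOn ℝ (⊤ : ℕ∞) (Function.uncurry g) HS

lemma uniqueHS : UniqueDiffOn ℝ HS := (uniqueDiffOn_Ici 0).prod uniqueDiffOn_univ

lemma st_hasDerivAt_x {g : ℝ → ℝ → ℝ} (hg : SmoothST g) {t : ℝ} (ht : 0 ≤ t) (x : ℝ) :
    HasDerivAt (g t) (fderivWithin ℝ (Function.uncurry g) HS (t, x) (0, 1)) x := by
  have hmem : (t, x) ∈ HS := ⟨ht, mem_univ _⟩
  have h1 := (hg.differentiableOn (by simp) (t, x) hmem).hasFDerivWithinAt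
  have h2 : HasDerivWithinAt (fun y : ℝ => (t, y)) ((0:ℝ), (1:ℝ)) univ x :=
    ((hasDerivAt_const x t).prodMk (hasDerivAt_id x)).hasDerivWithinAt
  have h3 := h1.comp_hasDerivWithinAt x h2 (fun y _ => ⟨ht, mem_univ _⟩)
  exact hasDerivWithinAt_univ.1 h3

lemma st_deriv {g : ℝ → ℝ → ℝ} (hg : SmoothST g) : SmoothST (fun t => deriv (g t)) := by
  have h1 : ContDiffOn ℝ (⊤ : ℕ∞) (fderivWithin ℝ (Function.uncurry g) HS) HS :=
    hg.fderivWithin uniqueHS (by simp)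
  have h2 : ContDiffOn ℝ (⊤ : ℕ∞)
      (fun q => fderivWithin ℝ (Function.uncurry g) HS q ((0:ℝ), (1:ℝ))) HS :=
    h1.clm_apply contDiffOn_const
  refine h2.congr ?_
  rintro ⟨t, x⟩ ⟨ht, -⟩
  exact (st_hasDerivAt_x hg ht x).deriv

lemma st_iter {g : ℝ → ℝ → ℝ} (hg : SmoothST g) (k : ℕ) :
    SmoothST (fun t => iteratedDeriv k (g t)) := by
  induction k with
  | zero => simpa using hg
  | succ k ih => simpa [iteratedDeriv_succ] using st_deriv ih

lemma st_slice {g : ℝ → ℝ → ℝ} (hg : SmoothST g) {t : ℝ} (ht : 0 ≤ t) :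
    ContDiff ℝ (⊤ : ℕ∞) (g t) := by
  rw [← contDiffOn_univ]
  exact hg.comp (contDiff_const.prodMk contDiff_id).contDiffOn (fun y _ => ⟨ht, mem_univ _⟩)

lemma st_hasDerivAt_x' {g : ℝ → ℝ → ℝ} (hg : SmoothST g) {t : ℝ} (ht : 0 ≤ t) (x : ℝ) :
    HasDerivAt (g t) (deriv (g t) x) x :=
  (st_hasDerivAt_x hg ht x).differentiableAt.hasDerivAt

lemma st_at {g : ℝ → ℝ → ℝ} (hg : SmoothST g) {t : ℝ} (ht : 0 < t) (x : ℝ) :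
    ContDiffAt ℝ (⊤ : ℕ∞) (Function.uncurry g) (t, x) :=
  hg.contDiffAt (prod_mem_nhds (Ici_mem_nhds ht) Filter.univ_mem)

lemma st_hasDerivAt_t {g : ℝ → ℝ → ℝ} (hg : SmoothST g) {t : ℝ} (ht : 0 < t) (x : ℝ) :
    HasDerivAt (fun s => g s x) (fderiv ℝ (Function.uncurry g) (t, x) (1, 0)) t := by
  have h1 := ((st_at hg ht x).differentiableAt (by simp)).hasFDerivAt
  have h2 : HasDerivAt (fun s : ℝ => (s, x)) ((1:ℝ), (0:ℝ)) t :=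
    (hasDerivAt_id t).prodMk (hasDerivAt_const t x)
  exact h1.comp_hasDerivAt t h2

lemma st_hasDerivAt_xf {g : ℝ → ℝ → ℝ} (hg : SmoothST g) {t : ℝ} (ht : 0 < t) (x : ℝ) :
    HasDerivAt (g t) (fderiv ℝ (Function.uncurry g) (t, x) (0, 1)) x := by
  have h1 := ((st_at hg ht x).differentiableAt (by simp)).hasFDerivAt
  have h2 : HasDerivAt (fun y : ℝ => (t, y)) ((0:ℝ), (1:ℝ)) x :=
    (hasDerivAt_const x t).prodMk (hasDerivAt_id x)
  exact h1.comp_hasDerivAt x h2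

/-- Equality of mixed partial derivatives. -/
lemma st_mixed {g : ℝ → ℝ → ℝ} (hg : SmoothST g) {t : ℝ} (ht : 0 < t) (x : ℝ) :
    deriv (fun s => deriv (g s) x) t = deriv (fun y => deriv (fun s => g s y) t) x := by
  have hc := st_at hg ht x
  have hsymm : IsSymmSndFDerivAt ℝ (Function.uncurry g) (t, x) :=
    hc.isSymmSndFDerivAt (by
      rw [minSmoothness_of_isRCLikeNormedField]; exact WithTop.coe_le_coe.2 (le_top : (2:ℕ∞) ≤ ⊤))
  have hd : DifferentiableAt ℝ (fderiv ℝ (Function.uncurry g)) (t, x) :=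
    (hc.fderiv_right (m := (⊤ : ℕ∞)) (by simp)).differentiableAt (by simp)
  have hF := hd.hasFDerivAt
  have a1 : HasDerivAt (fun s : ℝ => (s, x)) ((1:ℝ), (0:ℝ)) t :=
    (hasDerivAt_id t).prodMk (hasDerivAt_const t x)
  have a2 : HasDerivAt (fun y : ℝ => (t, y)) ((0:ℝ), (1:ℝ)) x :=
    (hasDerivAt_const x t).prodMk (hasDerivAt_id x)
  have b1 : HasDerivAt (fun s => fderiv ℝ (Function.uncurry g) (s, x))
      (fderiv ℝ (fderiv ℝ (Function.uncurry g)) (t, x) (1, 0)) t := hF.comp_hasDerivAt t a1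
  have b2 : HasDerivAt (fun y => fderiv ℝ (Function.uncurry g) (t, y))
      (fderiv ℝ (fderiv ℝ (Function.uncurry g)) (t, x) (0, 1)) x := hF.comp_hasDerivAt x a2
  have c1 : HasDerivAt (fun s => fderiv ℝ (Function.uncurry g) (s, x) ((0:ℝ), (1:ℝ)))
      (fderiv ℝ (fderiv ℝ (Function.uncurry g)) (t, x) (1, 0) (0, 1)) t := by
    have := b1.clm_apply (hasDerivAt_const t ((0:ℝ), (1:ℝ)))
    simpa using this
  have c2 : HasDerivAt (fun y => fderiv ℝ (Function.uncurry g) (t, y) ((1:ℝ), (0:ℝ)))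
      (fderiv ℝ (fderiv ℝ (Function.uncurry g)) (t, x) (0, 1) (1, 0)) x := by
    have := b2.clm_apply (hasDerivAt_const x ((1:ℝ), (0:ℝ)))
    simpa using this
  have d1 : HasDerivAt (fun s => deriv (g s) x)
      (fderiv ℝ (fderiv ℝ (Function.uncurry g)) (t, x) (1, 0) (0, 1)) t := by
    refine c1.congr_of_eventuallyEq ?_
    filter_upwards [Ioi_mem_nhds ht] with s hs
    exact (st_hasDerivAt_xf hg hs x).deriv
  have d2 : HasDerivAt (fun y => deriv (fun s => g s y) t)
      (fderiv ℝ (fderiv ℝ (Function.uncurry g)) (t, x) (0, 1) (1, 0)) x := by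
    refine c2.congr_of_eventuallyEq ?_
    filter_upwards with y
    exact (st_hasDerivAt_t hg ht y).deriv
  rw [d1.deriv, d2.deriv]
  exact hsymm _ _

/-! ### Maximum principle -/

lemma deriv_nonneg_of_left_max {φ : ℝ → ℝ} {d t : ℝ} (ht : 0 < t) (hφ : HasDerivAt φ d t)
    (hmax : ∀ s ∈ Icc 0 t, φ s ≤ φ t) : 0 ≤ d := by
  have h1 := hφ.tendsto_slope.mono_left (nhdsLT_le_nhdsNE t)
  refine ge_of_tendsto h1 ?_
  filter_upwards [Ioo_mem_nhdsLT ht] with s hs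
  rw [slope_def_field]
  have := hmax s ⟨hs.1.le, hs.2.le⟩
  exact div_nonneg_of_nonpos (by linarith) (by linarith [hs.2])

lemma second_deriv_nonpos {φ : ℝ → ℝ} {x : ℝ} (hc : Continuous φ) (hmax : ∀ y, φ y ≤ φ x) :
    deriv φ x = 0 ∧ deriv (deriv φ) x ≤ 0 := by
  have hl : IsLocalMax φ x := Filter.Eventually.of_forall hmax
  have h0 := hl.deriv_eq_zero
  refine ⟨h0, ?_⟩
  by_contra hh
  push Not at hh
  have hmin := isLocalMin_of_deriv_deriv_pos hh h0 hc.continuousAt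
  have heq : φ =ᶠ[nhds x] fun _ => φ x := by
    filter_upwards [hmin] with y hy
    exact le_antisymm (hmax y) hy
  have h2 : deriv (deriv φ) x = 0 := by
    rw [heq.deriv.deriv_eq]
    simp
  linarith

lemma max_principle {g : ℝ → ℝ → ℝ} (hg : SmoothST g) (hper : ∀ t x, g t (x + 1) = g t x)
    {K : ℝ} (h0 : ∀ x, g 0 x ≤ K)
    (H : ∀ t, 0 < t → ∀ x, K < g t x → deriv (g t) x = 0 → deriv (deriv (g t)) x ≤ 0 →
      deriv (fun s => g s x) t ≤ 0) :
    ∀ t, 0 ≤ t → ∀ x, g t x ≤ K := by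
  intro t0 ht0 x0
  by_contra hcon
  push Not at hcon
  have ht0' : 0 < t0 := by
    rcases ht0.eq_or_lt with h | h
    · rw [← h] at hcon; exact absurd (h0 x0) (not_le.2 hcon)
    · exact h
  set ε := (g t0 x0 - K) / (2 * t0) with hε
  have hεpos : 0 < ε := div_pos (by linarith) (by linarith)
  have hεt : ε * t0 = (g t0 x0 - K) / 2 := by rw [hε]; field_simp
  obtain ⟨y0, hy0, hy0e⟩ := periodic_exists_mem (hper t0) x0
  have hcomp : IsCompact (Icc (0:ℝ) t0 ×ˢ Icc (0:ℝ) 1) := isCompact_Icc.prod isCompact_Icc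
  have hcont : ContinuousOn (fun q : ℝ × ℝ => Function.uncurry g q - ε * q.1)
      (Icc (0:ℝ) t0 ×ˢ Icc (0:ℝ) 1) := by
    refine ContinuousOn.sub (hg.continuousOn.mono ?_) (by fun_prop)
    rintro ⟨a, b⟩ ⟨ha, _⟩
    exact ⟨ha.1, mem_univ _⟩
  obtain ⟨⟨t, x⟩, ⟨ht, hx⟩, hmax⟩ := hcomp.exists_isMaxOn
    ⟨(t0, y0), ⟨⟨ht0, le_rfl⟩, Ico_subset_Icc_self hy0⟩⟩ hcont
  have hmax' : ∀ s ∈ Icc (0:ℝ) t0, ∀ y, g s y - ε * s ≤ g t x - ε * t := by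
    intro s hs y
    obtain ⟨y', hy', hye⟩ := periodic_exists_mem (hper s) y
    have := hmax (show (s, y') ∈ Icc (0:ℝ) t0 ×ˢ Icc (0:ℝ) 1 from ⟨hs, Ico_subset_Icc_self hy'⟩)
    simp only [mem_ofPred_eq, Function.uncurry] at this
    rw [← hye]; exact this
  simp only at ht hx
  have hval := hmax' t0 ⟨ht0, le_rfl⟩ x0
  have hgt : K < g t x := by nlinarith [ht.1]
  have htpos : 0 < t := by
    rcases ht.1.eq_or_lt with h | h
    · rw [← h] at hgt; exact absurd (h0 x) (not_le.2 hgt)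
    · exact h
  obtain ⟨hd1, hd2⟩ := second_deriv_nonpos (st_slice hg ht.1).continuous
    (x := x) (fun y => by have := hmax' t ht y; linarith)
  have hle := H t htpos x hgt hd1 hd2
  have hder := (st_hasDerivAt_t hg htpos x).differentiableAt.hasDerivAt
  have hder2 : HasDerivAt (fun s => g s x - ε * s) (deriv (fun s => g s x) t - ε * 1) t :=
    hder.sub ((hasDerivAt_id t).const_mul ε)
  have := deriv_nonneg_of_left_max htpos hder2
    (fun s hs => hmax' s ⟨hs.1, hs.2.trans ht.2⟩ x)
  linarith

/-! ### Facts on a single profile -/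

lemma le_of_deriv_le {v : ℝ → ℝ} (hv : Differentiable ℝ v) (hper : ∀ x, v (x + 1) = v x)
    (hmean : ∫ x in Ioc (0:ℝ) 1, v x = 0) {K : ℝ} (hK : 0 ≤ K) (hd : ∀ x, deriv v x ≤ K)
    (x : ℝ) : |v x| ≤ K := by
  have hP : Function.Periodic v 1 := hper
  have hmvt : ∀ a b, a ≤ b → v b - v a ≤ K * (b - a) := fun a b hab =>
    image_sub_le_mul_sub_of_deriv_le hv hd hab
  rw [← intervalIntegral.integral_of_le zero_le_one] at hmean
  rw [abs_le]
  constructor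
  · by_contra hh
    push Not at hh
    have hneg : ∀ y, 0 < -v y := by
      intro y
      obtain ⟨y', hy', e⟩ := hP.exists_mem_Ico one_pos y x
      rw [e]
      have := hmvt x y' hy'.1
      nlinarith [hy'.1, hy'.2]
    have h1 := intervalIntegral.intervalIntegral_pos_of_pos_on (f := fun y => -v y)
      (hv.continuous.neg.intervalIntegrable 0 1) (fun y _ => hneg y) one_pos
    rw [intervalIntegral.integral_neg] at h1
    linarith
  · by_contra hh
    push Not at hh
    have hpos : ∀ y, 0 < v y := by
      intro y
      obtain ⟨y', hy', e⟩ := hP.exists_mem_Ico one_pos y (x - 1)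
      rw [e]
      have := hmvt y' x (by linarith [hy'.2])
      nlinarith [hy'.1, hy'.2]
    have h1 := intervalIntegral.intervalIntegral_pos_of_pos_on (f := v)
      (hv.continuous.intervalIntegrable 0 1) (fun y _ => hpos y) one_pos
    linarith

lemma l1_deriv_le {v : ℝ → ℝ} (hv : ContDiff ℝ (⊤ : ℕ∞) v) (hper : ∀ x, v (x + 1) = v x)
    {K : ℝ} (hK : 0 ≤ K) (hd : ∀ x, deriv v x ≤ K) :
    ∫ x in (0:ℝ)..1, |deriv v x| ≤ 2 * K := by
  have hc : Continuous (deriv v) := hv.continuous_deriv (by simp)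
  have h1 : ∫ x in (0:ℝ)..1, |deriv v x| ≤ ∫ x in (0:ℝ)..1, (2 * K - deriv v x) := by
    refine intervalIntegral.integral_mono_on zero_le_one (hc.abs.intervalIntegrable _ _)
      ((continuous_const.sub hc).intervalIntegrable _ _) fun x _ => ?_
    have := hd x
    rw [abs_le]; constructor <;> linarith
  rw [intervalIntegral.integral_sub (by simp) (hc.intervalIntegrable _ _),
    intervalIntegral.integral_deriv_eq_sub (fun x _ => hv.differentiable (by simp) x)
      (hc.intervalIntegrable _ _)] at h1
  have := hper 0
  simp only [zero_add] at this
  simpa [this] using h1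

lemma st_lpN_cont {g : ℝ → ℝ → ℝ} (hg : SmoothST g) {p : ℝ≥0∞} (hp : 1 ≤ p) {a b : ℝ}
    (ha : 0 ≤ a) : ContinuousOn (fun t => lpN p (g t)) (Icc a b) := by
  have hcomp : IsCompact (Icc a b ×ˢ Icc (0:ℝ) 1) := isCompact_Icc.prod isCompact_Icc
  have hcont : ContinuousOn (Function.uncurry g) (Icc a b ×ˢ Icc (0:ℝ) 1) := by
    refine hg.continuousOn.mono ?_
    rintro ⟨c, d⟩ ⟨hc, _⟩
    exact ⟨ha.trans hc.1, mem_univ _⟩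
  have hu := hcomp.uniformContinuousOn_of_continuous hcont
  rw [Metric.uniformContinuousOn_iff] at hu
  rw [Metric.continuousOn_iff]
  intro t ht ε hε
  obtain ⟨δ, hδ, H⟩ := hu (ε / 2) (by linarith)
  refine ⟨δ, hδ, fun s hs hst => ?_⟩
  have hb : ∀ x ∈ Icc (0:ℝ) 1, |g s x - g t x| ≤ ε / 2 := by
    intro x hx
    have := H (s, x) ⟨hs, hx⟩ (t, x) ⟨ht, hx⟩ (by simpa [Prod.dist_eq] using hst)
    rw [Real.dist_eq] at this
    exact this.le
  have cs : Continuous (g s) := (st_slice hg (ha.trans hs.1)).continuous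
  have ct : Continuous (g t) := (st_slice hg (ha.trans ht.1)).continuous
  have h1 := lpN_sub_le cs ct (by linarith) hb hp
  have h2 := lpN_sub_le ct cs (ε := ε / 2) (by linarith) (fun x hx => by rw [abs_sub_comm]; exact hb x hx) hp
  rw [Real.dist_eq, abs_lt]
  constructor <;> linarith

/-! ### A priori estimates for the Burgers equation -/

section burgers
variable {f : ℝ → ℝ} {σ ν : ℝ} {u : ℝ → ℝ → ℝ}

lemma bg_f1 (h : IsBurgersSolution f σ ν u) (y : ℝ) : HasDerivAt f (deriv f y) y :=
  (h.hf.differentiable (by simp) y).hasDerivAt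

lemma bg_f2 (h : IsBurgersSolution f σ ν u) (y : ℝ) :
    HasDerivAt (deriv f) (iteratedDeriv 2 f y) y := by
  have := smooth_iter h.hf 1 y
  rwa [iteratedDeriv_one] at this

lemma bg_ut (h : IsBurgersSolution f σ ν u) {t : ℝ} (ht : 0 < t) (x : ℝ) :
    deriv (fun s => u s x) t
      = ν * deriv (deriv (u t)) x - deriv f (u t x) * deriv (u t) x := by
  linarith [h.hpde t ht x]

lemma bg_utx (h : IsBurgersSolution f σ ν u) {t : ℝ} (ht : 0 < t) (x : ℝ) :
    deriv (fun s => deriv (u s) x) t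
      = ν * deriv (deriv (deriv (u t))) x - (iteratedDeriv 2 f (u t x) * deriv (u t) x ^ 2
        + deriv f (u t x) * deriv (deriv (u t)) x) := by
  have hs : SmoothST u := h.hu
  rw [st_mixed hs ht x]
  have e : (fun y => deriv (fun s => u s y) t) = fun y =>
      ν * deriv (deriv (u t)) y - deriv f (u t y) * deriv (u t) y :=
    funext fun y => bg_ut h ht y
  rw [e]
  have d1 := st_hasDerivAt_x' hs ht.le x
  have d2 := st_hasDerivAt_x' (st_deriv hs) ht.le x
  have d3 := st_hasDerivAt_x' (st_deriv (st_deriv hs)) ht.le x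
  have d4 : HasDerivAt (fun y => deriv f (u t y)) (iteratedDeriv 2 f (u t x) * deriv (u t) x) x :=
    (bg_f2 h (u t x)).comp x d1
  refine ((d3.const_mul ν).sub (d4.mul d2)).deriv.trans ?_
  ring

lemma bg_D (h : IsBurgersSolution f σ ν u) {D : ℝ} (hD : burgersD u = D) :
    0 < D ∧ D⁻¹ ≤ lpN 1 (u 0) ∧ ∀ x, |deriv (u 0) x| ≤ D := by
  have hs : SmoothST u := h.hu
  have sm := st_slice hs le_rfl
  have hpos : 0 < lpN 1 (u 0) := by
    rcases (lpN_nonneg 1 (u 0)).eq_or_lt with h0 | h0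
    · exfalso
      have h1 : eLpNorm (u 0) 1 (volume.restrict (Ioc (0:ℝ) 1)) = 0 := by
        have := h0.symm
        unfold lpN at this
        rw [ENNReal.toReal_eq_zero_iff] at this
        exact this.resolve_right (memLp_cont sm.continuous 1).2.ne
      rw [eLpNorm_eq_zero_iff sm.continuous.aestronglyMeasurable one_ne_zero] at h1
      have h2 : lpN ⊤ (u 0) = 0 := by
        unfold lpN
        rw [eLpNorm_congr_ae h1]; simp
      obtain ⟨x, hx⟩ := h.hinit
      have := abs_le_lpN_top sm.continuous (h.hper 0) x
      rw [h2] at this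
      exact hx (abs_nonpos_iff.1 this)
    · exact h0
  have h1 : (lpN 1 (u 0))⁻¹ ≤ D := by
    rw [← hD]
    have : lpN 1 (u 0) = sobLp 0 1 (u 0) := by rw [sobLp_eq, iteratedDeriv_zero]
    rw [this]; exact le_max_left _ _
  have h2 : lpN ⊤ (deriv (u 0)) ≤ D := by
    rw [← hD]
    have : lpN ⊤ (deriv (u 0)) = sobLp 1 ⊤ (u 0) := by rw [sobLp_eq, iteratedDeriv_one]
    rw [this]; exact le_max_right _ _
  have hDp : 0 < D := lt_of_lt_of_le (inv_pos.2 hpos) h1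
  refine ⟨hDp, inv_le_of_inv_le₀ hpos h1, fun x => ?_⟩
  exact (abs_le_lpN_top (sm.continuous_deriv (by simp)) (per_deriv (h.hper 0)) x).trans h2

lemma bg_ux_le (h : IsBurgersSolution f σ ν u) {D : ℝ} (hD : burgersD u = D) :
    ∀ t, 0 ≤ t → ∀ x, deriv (u t) x ≤ D := by
  have hs : SmoothST u := h.hu
  refine max_principle (st_deriv hs) (fun t => per_deriv (h.hper t))
    (fun x => (le_abs_self _).trans ((bg_D h hD).2.2 x)) ?_
  intro t ht x _ h1 h2
  rw [bg_utx h ht x, h1]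
  have := mul_nonneg (h.hσ.le.trans (h.hconv (u t x))) (sq_nonneg (deriv (u t) x))
  have := mul_nonpos_of_nonneg_of_nonpos h.hν.le h2
  linarith

lemma bg_oleinik (h : IsBurgersSolution f σ ν u) :
    ∀ t, 0 ≤ t → ∀ x, t * deriv (u t) x ≤ σ⁻¹ := by
  have hs : SmoothST u := h.hu
  have hg : SmoothST (fun t x => t * deriv (u t) x) := by
    have h1 : ContDiffOn ℝ (⊤ : ℕ∞) (fun q : ℝ × ℝ => q.1) HS := contDiff_fst.contDiffOn
    exact h1.mul (st_deriv hs)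
  refine max_principle hg (fun t x => by rw [per_deriv (h.hper t)])
    (fun x => by simpa using h.hσ.le) ?_
  intro t ht x hK h1 h2
  have e1 : deriv (fun y => t * deriv (u t) y) = fun y => t * deriv (deriv (u t)) y := by
    ext y
    exact ((st_hasDerivAt_x' (st_deriv hs) ht.le y).const_mul t).deriv
  have e2 : deriv (fun y => t * deriv (deriv (u t)) y) x = t * deriv (deriv (deriv (u t))) x :=
    ((st_hasDerivAt_x' (st_deriv (st_deriv hs)) ht.le x).const_mul t).deriv
  rw [e1] at h1 h2
  rw [e2] at h2
  have h1' : deriv (deriv (u t)) x = 0 := by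
    rcases mul_eq_zero.1 h1 with h' | h'
    · exact absurd h' ht.ne'
    · exact h'
  have d := (st_hasDerivAt_t (st_deriv hs) ht x).differentiableAt.hasDerivAt
  have e3 : deriv (fun s => s * deriv (u s) x) t
      = 1 * deriv (u t) x + t * deriv (fun s => deriv (u s) x) t :=
    ((hasDerivAt_id t).mul d).deriv
  rw [e3, bg_utx h ht x, h1']
  set v := deriv (u t) x
  set w := deriv (deriv (deriv (u t))) x
  have hσ := h.hσ
  have hc := h.hconv (u t x)
  have h3 : ν * (t * w) ≤ 0 := mul_nonpos_of_nonneg_of_nonpos h.hν.le h2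
  have hv : 0 < v := by
    have : 0 < t * v := lt_trans (inv_pos.2 hσ) hK
    exact (mul_pos_iff_of_pos_left ht).1 this
  have h4 : 1 ≤ σ * (t * v) := by
    have := mul_le_mul_of_nonneg_left hK.le hσ.le
    rwa [mul_inv_cancel₀ hσ.ne'] at this
  have h5 : σ * (t * v) ≤ iteratedDeriv 2 f (u t x) * (t * v) :=
    mul_le_mul_of_nonneg_right hc (by positivity)
  have h6 : v * 1 ≤ v * (iteratedDeriv 2 f (u t x) * (t * v)) :=
    mul_le_mul_of_nonneg_left (h4.trans h5) hv.le
  nlinarith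

lemma bg_abs_le (h : IsBurgersSolution f σ ν u) {D : ℝ} (hD : burgersD u = D) {t : ℝ}
    (ht : 0 ≤ t) (x : ℝ) : |u t x| ≤ D := by
  have hs : SmoothST u := h.hu
  exact le_of_deriv_le ((st_slice hs ht).differentiable (by simp)) (h.hper t) (h.hmean t ht)
    (bg_D h hD).1.le (bg_ux_le h hD t ht) x

lemma bg_flux (h : IsBurgersSolution f σ ν u) {D F : ℝ} (hD : burgersD u = D) (hν1 : ν ≤ 1)
    (hF : ∀ y, |y| ≤ D → |f y| ≤ F) (c : ℝ) (hc : |c| = 1) :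
    ∀ t, 0 ≤ t → ∀ x, c * (ν * deriv (u t) x - f (u t x)) ≤ D + F := by
  have hs : SmoothST u := h.hu
  have hν := h.hν
  have hfu : SmoothST (fun t x => f (u t x)) := h.hf.comp_contDiffOn hs
  have hg : SmoothST (fun t x => c * (ν * deriv (u t) x - f (u t x))) :=
    contDiffOn_const.mul ((contDiffOn_const.mul (st_deriv hs)).sub hfu)
  refine max_principle hg (fun t x => by rw [per_deriv (h.hper t), h.hper t]) (fun x => ?_) ?_
  · refine (le_abs_self _).trans ?_
    rw [abs_mul, hc, one_mul]
    have h1 := (bg_D h hD).2.2 x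
    have h2 := hF _ (bg_abs_le h hD le_rfl x)
    have h3 : |ν * deriv (u 0) x| ≤ D := by
      rw [abs_mul, abs_of_pos hν]
      nlinarith [abs_nonneg (deriv (u 0) x)]
    calc _ ≤ |ν * deriv (u 0) x| + |f (u 0 x)| := abs_sub _ _
      _ ≤ _ := by linarith
  · intro t ht x _ h1 h2
    have d1 := fun y => st_hasDerivAt_x' hs ht.le y
    have d2 := fun y => st_hasDerivAt_x' (st_deriv hs) ht.le y
    have dfu : ∀ y, HasDerivAt (fun y => f (u t y)) (deriv f (u t y) * deriv (u t) y) y :=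
      fun y => (bg_f1 h (u t y)).comp y (d1 y)
    have e1 : deriv (fun y => c * (ν * deriv (u t) y - f (u t y))) =
        fun y => c * deriv (fun s => u s y) t := by
      ext y
      rw [bg_ut h ht y]
      exact ((((d2 y).const_mul ν).sub (dfu y)).const_mul c).deriv
    rw [e1] at h1 h2
    rw [deriv_const_mul_field, ← st_mixed hs ht x] at h2
    have dt1 := (st_hasDerivAt_t hs ht x).differentiableAt.hasDerivAt
    have dt2 := (st_hasDerivAt_t (st_deriv hs) ht x).differentiableAt.hasDerivAt
    have dt3 : HasDerivAt (fun s => f (u s x)) (deriv f (u t x) * deriv (fun s => u s x) t) t :=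
      HasDerivAt.comp (h := fun s => u s x) t (bg_f1 h (u t x)) dt1
    have e2 := (((dt2.const_mul ν).sub dt3).const_mul c).deriv
    refine le_trans (le_of_eq e2) ?_
    have h1' : c * deriv (fun s => u s x) t = 0 := h1
    have : c * (ν * deriv (fun s => deriv (u s) x) t
        - deriv f (u t x) * deriv (fun s => u s x) t)
        = ν * (c * deriv (fun s => deriv (u s) x) t)
          - deriv f (u t x) * (c * deriv (fun s => u s x) t) := by ring
    rw [this, h1', mul_zero, sub_zero]
    exact mul_nonpos_of_nonneg_of_nonpos hν.le h2

lemma bg_ux_abs (h : IsBurgersSolution f σ ν u) {D F : ℝ} (hD : burgersD u = D) (hν1 : ν ≤ 1)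
    (hF : ∀ y, |y| ≤ D → |f y| ≤ F) {t : ℝ} (ht : 0 ≤ t) (x : ℝ) :
    |deriv (u t) x| ≤ (D + 2 * F) / ν := by
  have h1 := bg_flux h hD hν1 hF 1 (by simp) t ht x
  have h2 := bg_flux h hD hν1 hF (-1) (by simp) t ht x
  have h3 := abs_le.1 (hF _ (bg_abs_le h hD ht x))
  rw [le_div_iff₀ h.hν]
  have : |deriv (u t) x| * ν = |ν * deriv (u t) x| := by
    rw [abs_mul, abs_of_pos h.hν, mul_comm]
  rw [this, abs_le]
  constructor <;> linarith [h3.1, h3.2]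

/-- Energy balance. -/
lemma bg_energy (h : IsBurgersSolution f σ ν u) {a b : ℝ} (ha : 0 ≤ a) (hab : a ≤ b) :
    (∫ x in (0:ℝ)..1, u b x ^ 2) - (∫ x in (0:ℝ)..1, u a x ^ 2)
      = -(2 * ν) * ∫ t in a..b, lpN 2 (deriv (u t)) ^ 2 := by
  have hs : SmoothST u := h.hu
  set R : ℝ → ℝ → ℝ := fun t x =>
    2 * u t x * (ν * deriv (deriv (u t)) x - deriv f (u t x) * deriv (u t) x) with hR
  have hf' : ContDiff ℝ (⊤ : ℕ∞) (deriv f) := by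
    have := h.hf.iterate_deriv 1
    simpa using this
  have hfu : SmoothST (fun t x => deriv f (u t x)) := hf'.comp_contDiffOn hs
  have hRs : SmoothST R :=
    (contDiffOn_const.mul hs).mul
      ((contDiffOn_const.mul (st_deriv (st_deriv hs))).sub (hfu.mul (st_deriv hs)))
  -- space integral
  have hspace : ∀ t, 0 ≤ t → ∫ x in (0:ℝ)..1, R t x = -(2 * ν) * lpN 2 (deriv (u t)) ^ 2 := by
    intro t ht
    have sm := st_slice hs ht
    have c0 := sm.continuous
    have c1 : Continuous (deriv (u t)) := (st_slice (st_deriv hs) ht).continuous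
    have cR : Continuous (R t) := (st_slice hRs ht).continuous
    rw [lpN_two c1]
    have hg : Continuous (fun y : ℝ => y * deriv f y) := continuous_id.mul hf'.continuous
    have key : ∀ x, HasDerivAt (fun x => 2 * (ν * (u t x * deriv (u t) x)
        - ∫ y in (0:ℝ)..(u t x), y * deriv f y))
        (R t x + 2 * ν * deriv (u t) x ^ 2) x := by
      intro x
      have d1 := st_hasDerivAt_x' hs ht x
      have d2 := st_hasDerivAt_x' (st_deriv hs) ht x
      have d3 : HasDerivAt (fun z => ∫ y in (0:ℝ)..z, y * deriv f y) (u t x * deriv f (u t x))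
          (u t x) := hg.integral_hasStrictDerivAt 0 (u t x) |>.hasDerivAt
      have d4 := d3.comp x d1
      have d5 := (((d1.mul d2).const_mul ν).sub d4).const_mul 2
      refine d5.congr_deriv ?_
      simp only [hR]
      ring
    have hI := intervalIntegral.integral_eq_sub_of_hasDerivAt (a := 0) (b := 1)
      (fun x _ => key x)
      ((cR.add (continuous_const.mul (c1.pow 2))).intervalIntegrable _ _)
    have p0 : u t 1 = u t 0 := by have := h.hper t 0; rwa [zero_add] at this
    have p1 : deriv (u t) 1 = deriv (u t) 0 := by
      have := per_deriv (h.hper t) 0; rwa [zero_add] at this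
    have c2 : Continuous (fun x => 2 * ν * deriv (u t) x ^ 2) := continuous_const.mul (c1.pow 2)
    rw [p0, p1, sub_self, intervalIntegral.integral_add (cR.intervalIntegrable _ _)
      (c2.intervalIntegrable _ _),
      intervalIntegral.integral_const_mul] at hI
    linarith
  -- time integral
  have htime : ∀ x, ∫ t in a..b, R t x = u b x ^ 2 - u a x ^ 2 := by
    intro x
    have hline : ∀ g : ℝ → ℝ → ℝ, SmoothST g → ContinuousOn (fun t => g t x) (Icc a b) := by
      intro g hg
      exact hg.continuousOn.comp (f := fun t : ℝ => (t, x)) (by fun_prop)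
        (fun t ht => ⟨ha.trans ht.1, mem_univ _⟩)
    refine intervalIntegral.integral_eq_sub_of_hasDerivAt_of_le hab
      (f := fun t => u t x ^ 2) ((hline u hs).pow 2) ?_ ?_
    · intro t ht
      have htp : 0 < t := lt_of_le_of_lt ha ht.1
      have d := (st_hasDerivAt_t hs htp x).differentiableAt.hasDerivAt
      rw [bg_ut h htp x] at d
      refine (d.pow 2).congr_deriv ?_
      simp only [hR]; push_cast; ring
    · exact (hline R hRs).intervalIntegrable_of_Icc hab
  have hswap : ∫ t in a..b, (∫ x in Ioc (0:ℝ) 1, R t x)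
      = ∫ x in Ioc (0:ℝ) 1, (∫ t in a..b, R t x) := by
    refine intervalIntegral_integral_swap ?_
    rw [Measure.prod_restrict, uIoc_of_le hab]
    have hcomp : IsCompact (Icc a b ×ˢ Icc (0:ℝ) 1) := isCompact_Icc.prod isCompact_Icc
    have hcont : ContinuousOn (Function.uncurry R) (Icc a b ×ˢ Icc (0:ℝ) 1) := by
      refine hRs.continuousOn.mono ?_
      rintro ⟨c, d⟩ ⟨hc, _⟩
      exact ⟨ha.trans hc.1, mem_univ _⟩
    exact (hcont.integrableOn_compact (μ := (volume : Measure ℝ).prod volume) hcomp).mono_set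
      (prod_mono Ioc_subset_Icc_self Ioc_subset_Icc_self)
  simp only [htime] at hswap
  have e1 : ∫ t in a..b, (∫ x in Ioc (0:ℝ) 1, R t x)
      = ∫ t in a..b, -(2 * ν) * lpN 2 (deriv (u t)) ^ 2 := by
    refine intervalIntegral.integral_congr fun t ht => ?_
    rw [uIcc_of_le hab] at ht
    have := hspace t (ha.trans ht.1)
    rwa [intervalIntegral.integral_of_le zero_le_one] at this
  rw [e1, intervalIntegral.integral_const_mul] at hswap
  rw [hswap, ← intervalIntegral.integral_of_le zero_le_one]
  have cb := (st_slice hs (ha.trans hab)).continuous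
  have ca := (st_slice hs ha).continuous
  have cb2 : Continuous (fun x => u b x ^ 2) := cb.pow 2
  have ca2 : Continuous (fun x => u a x ^ 2) := ca.pow 2
  rw [intervalIntegral.integral_sub (cb2.intervalIntegrable _ _) (ca2.intervalIntegrable _ _)]

end burgers

section final
variable {f : ℝ → ℝ} {σ ν D Ct : ℝ} {u : ℝ → ℝ → ℝ}

lemma bg_energy_lower (h : IsBurgersSolution f σ ν u) (hD : burgersD u = D)
    (hb : ∀ t, 0 ≤ t → sobLp 1 2 (u t) ^ 2 ≤ Ct * ν⁻¹) {t : ℝ} (ht : 0 ≤ t) :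
    (D ^ 2)⁻¹ - 2 * t * Ct ≤ ∫ x in (0:ℝ)..1, u t x ^ 2 := by
  have hs : SmoothST u := h.hu
  have hE := bg_energy h le_rfl ht
  obtain ⟨hDp, hD1, _⟩ := bg_D h hD
  have c0 := (st_slice hs le_rfl).continuous
  have h0 : (D ^ 2)⁻¹ ≤ ∫ x in (0:ℝ)..1, u 0 x ^ 2 := by
    rw [← lpN_two c0, ← inv_pow]
    have := hD1.trans (lpN_mono_exp c0 (p := 1) (q := 2) (by norm_num))
    exact pow_le_pow_left₀ (by positivity) this 2
  have h1 : ∫ s in (0:ℝ)..t, lpN 2 (deriv (u s)) ^ 2 ≤ ∫ s in (0:ℝ)..t, Ct * ν⁻¹ := by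
    refine intervalIntegral.integral_mono_on ht ?_ (by simp) fun s hs' => ?_
    · exact ((st_lpN_cont (st_deriv hs) (by norm_num) le_rfl).pow 2).intervalIntegrable_of_Icc ht
    · have := hb s hs'.1
      rwa [sobLp_eq, iteratedDeriv_one] at this
  rw [intervalIntegral.integral_const, smul_eq_mul, sub_zero] at h1
  have h2 := mul_le_mul_of_nonneg_left h1 (by linarith [h.hν] : 0 ≤ 2 * ν)
  have h3 : 2 * ν * (t * (Ct * ν⁻¹)) = 2 * t * Ct := by
    have := h.hν.ne'
    field_simp
  linarith

lemma bg_energy_upper (h : IsBurgersSolution f σ ν u) (hD : burgersD u = D) {T : ℝ}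
    (hT : 2 * D * σ⁻¹ ≤ T) : ∫ x in (0:ℝ)..1, u T x ^ 2 ≤ (D ^ 2)⁻¹ / 4 := by
  have hs : SmoothST u := h.hu
  obtain ⟨hDp, -, -⟩ := bg_D h hD
  have hσ := h.hσ
  have hTp : 0 < T := lt_of_lt_of_le (by positivity) hT
  have hK : ∀ x, deriv (u T) x ≤ (2 * D)⁻¹ := by
    intro x
    have h1 := bg_oleinik h T hTp.le x
    by_contra hh
    push Not at hh
    have h2 : 2 * D * σ⁻¹ * (2 * D)⁻¹ = σ⁻¹ := by field_simp
    have h3 : T * (2 * D)⁻¹ < T * deriv (u T) x := mul_lt_mul_of_pos_left hh hTp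
    have h4 : 2 * D * σ⁻¹ * (2 * D)⁻¹ ≤ T * (2 * D)⁻¹ :=
      mul_le_mul_of_nonneg_right hT (by positivity)
    linarith
  have sm := st_slice hs hTp.le
  have hb := le_of_deriv_le (sm.differentiable (by simp)) (h.hper T) (h.hmean T hTp.le)
    (by positivity) hK
  rw [← lpN_two sm.continuous]
  have := lpN_le_of_bound (by positivity) hb 2
  calc lpN 2 (u T) ^ 2 ≤ ((2 * D)⁻¹) ^ 2 := pow_le_pow_left₀ (lpN_nonneg _ _) this 2
    _ = _ := by field_simp; norm_num

lemma bg_good (h : IsBurgersSolution f σ ν u) (hD : burgersD u = D) {F lam : ℝ} (hν1 : ν ≤ 1)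
    (hF : ∀ y, |y| ≤ D → |f y| ≤ F) {t : ℝ} (ht : 0 ≤ t)
    (hl : lam / ν ≤ lpN 2 (deriv (u t)) ^ 2) : GoodFn D lam (D + 2 * F) ν (u t) := by
  have hs : SmoothST u := h.hu
  have sm := st_slice hs ht
  refine ⟨sm, h.hper t, bg_abs_le h hD ht, ?_, bg_ux_abs h hD hν1 hF ht, ?_⟩
  · exact l1_deriv_le sm (h.hper t) (bg_D h hD).1.le (bg_ux_le h hD t ht)
  · rwa [lpN_two (sm.continuous_deriv (by simp))] at hl

end final

/-- For every integer `m ≥ 0` and `p ∈ [1,∞]`, with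
`γ = max(0, m - 1/p)`, there is `c > 0` depending only on `f`, `D`, `m`, `p`
such that for every `ν ∈ (0,1]`, `{|u(t)|_{m,p}²}^{1/2} ≥ c ν^{-γ}`. -/
theorem statement10 (f : ℝ → ℝ) (σ D Ct : ℝ) (hCt : 0 < Ct)
    (hCtb : ∀ ν, 0 < ν → ν ≤ 1 →
      ∀ u : ℝ → ℝ → ℝ, IsBurgersSolution f σ ν u → burgersD u = D →
        ∀ t, 0 ≤ t → sobLp 1 2 (u t) ^ 2 ≤ Ct * ν⁻¹)
    (m : ℕ) (p : ℝ≥0∞) (hp : 1 ≤ p) :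
    ∃ c > 0, ∀ ν, 0 < ν → ν ≤ 1 →
      ∀ u : ℝ → ℝ → ℝ, IsBurgersSolution f σ ν u → burgersD u = D →
        c * ν ^ (-(max 0 ((m : ℝ) - (1 / p).toReal)))
          ≤ Real.sqrt (timeAvg (burgersT₁ D Ct) (burgersT₂ σ D Ct)
              (fun t => sobLp m p (u t) ^ 2)) := by
  by_cases hex : ∃ ν u, IsBurgersSolution f σ ν u ∧ burgersD u = D
  swap
  · exact ⟨1, one_pos, fun ν _ _ u h1 h2 => absurd ⟨ν, u, h1, h2⟩ hex⟩
  obtain ⟨ν₀, u₀, hs₀, hD₀⟩ := hex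
  have hDp : 0 < D := (bg_D hs₀ hD₀).1
  have hσ : 0 < σ := hs₀.hσ
  have hfc : Continuous f := hs₀.hf.continuous
  obtain ⟨F, hF'⟩ := (isCompact_Icc (a := -D) (b := D)).exists_bound_of_continuousOn
    hfc.continuousOn
  have hF : ∀ y, |y| ≤ D → |f y| ≤ F := fun y hy => hF' y (abs_le.1 hy)
  have hF0 : 0 ≤ F := (abs_nonneg _).trans (hF 0 (by simpa using hDp.le))
  set δ := (D ^ 2)⁻¹ with hδ
  have hδp : 0 < δ := by positivity
  set T₁ := burgersT₁ D Ct with hT₁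
  set T₂ := burgersT₂ σ D Ct with hT₂
  have hT1p : 0 < T₁ := by rw [hT₁, burgersT₁]; positivity
  have hT1e : T₁ * Ct = δ / 4 := by
    rw [hT₁, burgersT₁]
    field_simp
    rw [hδ, mul_inv_cancel₀ (by positivity)]
  have hT21 : 3 / 2 * T₁ ≤ T₂ := le_max_left _ _
  have hT22 : 2 * D * σ⁻¹ ≤ T₂ := le_max_right _ _
  have hL : 0 < T₂ - T₁ := by linarith
  have hT12 : T₁ ≤ T₂ := by linarith
  have hintg : ∀ ν u, IsBurgersSolution f σ ν u → ∀ b, T₁ ≤ b →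
      IntervalIntegrable (fun t => sobLp m p (u t) ^ 2) volume T₁ b := by
    intro ν u h b hb
    exact ((st_lpN_cont (st_iter h.hu m) hp hT1p.le).pow 2).intervalIntegrable_of_Icc hb
  rcases Nat.eq_zero_or_pos m with hm | hm
  · -- the case `m = 0`
    subst hm
    refine ⟨Real.sqrt ((T₂ - T₁)⁻¹ * (T₁ / 2 * (δ / 4 / D) ^ 2)), by positivity, ?_⟩
    intro ν hν hν1 u h hD
    have hs : SmoothST u := h.hu
    obtain ⟨q0, q1⟩ := one_div_toReal_mem hp
    rw [max_eq_left (by push_cast; linarith), neg_zero, Real.rpow_zero, mul_one]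
    refine Real.sqrt_le_sqrt ?_
    unfold timeAvg
    refine mul_le_mul_of_nonneg_left ?_ (by positivity)
    have hpt : ∀ t ∈ Icc T₁ (3 / 2 * T₁), (δ / 4 / D) ^ 2 ≤ sobLp 0 p (u t) ^ 2 := by
      intro t ht
      have ht0 : 0 ≤ t := hT1p.le.trans ht.1
      have c := (st_slice hs ht0).continuous
      have h1 := bg_energy_lower h hD (hCtb ν hν hν1 u h hD) ht0
      have h2 : δ / 4 ≤ ∫ x in (0:ℝ)..1, u t x ^ 2 := by
        have : t * Ct ≤ 3 / 2 * (δ / 4) := by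
          rw [← hT1e]
          nlinarith [ht.2]
        linarith
      have h3 : ∫ x in (0:ℝ)..1, u t x ^ 2 ≤ D * lpN 1 (u t) := by
        rw [lpN_one c, ← intervalIntegral.integral_const_mul]
        have c2 : Continuous (fun x => u t x ^ 2) := c.pow 2
        have c3 : Continuous (fun x => D * |u t x|) := continuous_const.mul c.abs
        refine intervalIntegral.integral_mono_on zero_le_one (c2.intervalIntegrable _ _)
          (c3.intervalIntegrable _ _) fun x _ => ?_
        rw [← sq_abs]
        nlinarith [bg_abs_le h hD ht0 x, abs_nonneg (u t x)]
      have h4 : lpN 1 (u t) ≤ sobLp 0 p (u t) := by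
        rw [sobLp_eq, iteratedDeriv_zero]
        exact lpN_mono_exp c hp
      have h5 : δ / 4 / D ≤ sobLp 0 p (u t) := by
        refine le_trans ?_ h4
        rw [div_le_iff₀ hDp]
        linarith
      exact pow_le_pow_left₀ (by positivity) h5 2
    have h6 : ∫ t in T₁..(3 / 2 * T₁), (δ / 4 / D) ^ 2
        ≤ ∫ t in T₁..(3 / 2 * T₁), sobLp 0 p (u t) ^ 2 :=
      intervalIntegral.integral_mono_on (by linarith) (by simp)
        (hintg ν u h _ (by linarith)) hpt
    have h7 : ∫ t in T₁..(3 / 2 * T₁), sobLp 0 p (u t) ^ 2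
        ≤ ∫ t in T₁..T₂, sobLp 0 p (u t) ^ 2 :=
      intervalIntegral.integral_mono_interval le_rfl (by linarith) hT21
        (Filter.Eventually.of_forall fun t => sq_nonneg _) (hintg ν u h _ hT12)
    rw [intervalIntegral.integral_const, smul_eq_mul] at h6
    have e : 3 / 2 * T₁ - T₁ = T₁ / 2 := by ring
    rw [e] at h6
    exact h6.trans h7
  · -- the case `m ≥ 1`
    set lam := δ / (16 * (T₂ - T₁)) with hlam
    have hlamp : 0 < lam := by positivity
    obtain ⟨c₁, hc₁, H⟩ := good_lower hDp hlamp (by positivity : 0 < D + 2 * F) m hm hp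
    refine ⟨Real.sqrt ((T₂ - T₁)⁻¹ * (c₁ ^ 2 / Ct * (δ / 16))), by positivity, ?_⟩
    intro ν hν hν1 u h hD
    have hs : SmoothST u := h.hu
    set G := ν ^ (-(max 0 ((m : ℝ) - (1 / p).toReal))) with hG
    have hG0 : 0 < G := by positivity
    refine Real.le_sqrt_of_sq_le ?_
    rw [mul_pow, Real.sq_sqrt (by positivity)]
    unfold timeAvg
    rw [mul_assoc]
    refine mul_le_mul_of_nonneg_left ?_ (by positivity)
    set A : ℝ → ℝ := fun t => lpN 2 (deriv (u t)) ^ 2 with hA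
    have hAint : IntervalIntegrable A volume T₁ T₂ :=
      ((st_lpN_cont (st_deriv hs) (by norm_num) hT1p.le).pow 2).intervalIntegrable_of_Icc hT12
    have hpt : ∀ t ∈ Icc T₁ T₂, (c₁ * G) ^ 2 / Ct * (ν * A t - lam) ≤ sobLp m p (u t) ^ 2 := by
      intro t ht
      have ht0 : 0 ≤ t := hT1p.le.trans ht.1
      have hAle : ν * A t ≤ Ct := by
        have := hCtb ν hν hν1 u h hD t ht0
        rw [sobLp_eq, iteratedDeriv_one] at this
        have h1 := mul_le_mul_of_nonneg_left this hν.le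
        have h2 : ν * (Ct * ν⁻¹) = Ct := by field_simp
        rw [h2] at h1
        exact h1
      by_cases hgood : lam / ν ≤ A t
      · have h1 := H ν hν (u t) (bg_good h hD hν1 hF ht0 hgood)
        have h2 : (c₁ * G) ^ 2 ≤ sobLp m p (u t) ^ 2 := pow_le_pow_left₀ (by positivity) h1 2
        refine le_trans ?_ h2
        rw [div_mul_eq_mul_div, div_le_iff₀ hCt]
        exact mul_le_mul_of_nonneg_left (by linarith) (by positivity)
      · push Not at hgood
        rw [lt_div_iff₀ hν] at hgood
        refine le_trans (mul_nonpos_of_nonneg_of_nonpos (by positivity) (by linarith))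
          (sq_nonneg _)
    have hI : ∫ t in T₁..T₂, (c₁ * G) ^ 2 / Ct * (ν * A t - lam)
        ≤ ∫ t in T₁..T₂, sobLp m p (u t) ^ 2 :=
      intervalIntegral.integral_mono_on hT12
        (((hAint.const_mul ν).sub (by simp)).const_mul _) (hintg ν u h _ hT12) hpt
    rw [intervalIntegral.integral_const_mul, intervalIntegral.integral_sub (hAint.const_mul ν)
      (by simp), intervalIntegral.integral_const_mul, intervalIntegral.integral_const,
      smul_eq_mul] at hI
    have hE := bg_energy h hT1p.le hT12
    have hE1 := bg_energy_lower h hD (hCtb ν hν hν1 u h hD) hT1p.le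
    have hE2 := bg_energy_upper h hD hT22
    have h1 : δ / 8 ≤ ν * ∫ t in T₁..T₂, A t := by
      have e : (D ^ 2)⁻¹ = δ := rfl
      rw [e] at hE1 hE2
      simp only [hA]
      linarith
    have h2 : (T₂ - T₁) * lam = δ / 16 := by rw [hlam]; field_simp
    refine le_trans ?_ hI
    rw [h2]
    have h3 : δ / 16 ≤ ν * (∫ t in T₁..T₂, A t) - δ / 16 := by linarith
    refine le_trans (le_of_eq ?_) (mul_le_mul_of_nonneg_left h3 (by positivity))
    ring
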